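/- arXiv:2502.02297 — 3 statements merged into one kernel-verified Lean document; each statement's English description precedes it below -/
import Mathlib

section
/- Let F_g(a1,a2) = (1/12^g) * \sum_{j=0}^{g} [ (2j-1)!! / ( (2g+1)!! * (2j)!! ) ] * (a1+a2)^{2j} * (a1^2 - a1*a2 + a2^2)^{g-j} for real numbers a1, a2 and integers g \ge 0. Then F_0(a1,a2) = 1, and for every integer g \ge 1 and all real a1, a2, the recursion (2g+1) * F_g(a1,a2) = (a1+a2)^{2g} / (24^g * g!) + ((a1^2 - a1*a2 + a2^2)/12) * F_{g-1}(a1,a2) holds. -/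
/-- The odd double factorial `(2n-1)!! = (2n)! / (2^n * n!)`, as a real number,
with the convention `(-1)!! = 1` (the case `n = 0`). -/
noncomputable def oddDF (n : ℕ) : ℝ :=
  (Nat.factorial (2 * n)) / (2 ^ n * Nat.factorial n)

/-- The closed-form expression
`F_g(a1,a2) = (1/12^g) * ∑_{j=0}^g ((2j-1)!! / ((2g+1)!! * (2j)!!)) *
  (a1+a2)^{2j} * (a1^2 - a1*a2 + a2^2)^{g-j}`,
where `(2j)!! = 2^j * j!`. -/
noncomputable def F (g : ℕ) (a1 a2 : ℝ) : ℝ :=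
  (1 / 12 ^ g) * ∑ j ∈ Finset.range (g + 1),
    (oddDF j / (oddDF (g + 1) * (2 ^ j * Nat.factorial j))) *
      (a1 + a2) ^ (2 * j) * (a1 ^ 2 - a1 * a2 + a2 ^ 2) ^ (g - j)

/-!
Write `q = a1 ^ 2 - a1 * a2 + a2 ^ 2`. After clearing the prefactor, `12 ^ g * (2g+1)!! * F g`
is a sum `∑ c_j * q ^ (g - j)` over `j ≤ g` whose coefficients `c_j` do not depend on `g`. Raising
`g` by one therefore multiplies this sum by `q` and adds the single new coefficient `c_{g+1}`;
dividing by `12 ^ (g + 1) * (2g+1)!!` gives the recursion.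
-/

theorem oddDF_zero : oddDF 0 = 1 := by simp [oddDF]

theorem oddDF_succ (n : ℕ) : oddDF (n + 1) = (2 * (n : ℝ) + 1) * oddDF n := by
  simp only [oddDF, show 2 * (n + 1) = 2 * n + 1 + 1 by ring, Nat.factorial_succ]
  push_cast
  field_simp
  ring

theorem oddDF_pos (n : ℕ) : 0 < oddDF n := by
  unfold oddDF
  positivity

theorem sum_range_succ_mul_pow_sub {R : Type*} [CommSemiring R] (f : ℕ → R) (x : R) (n : ℕ) :
    ∑ j ∈ Finset.range (n + 1 + 1), f j * x ^ (n + 1 - j) =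
      f (n + 1) + x * ∑ j ∈ Finset.range (n + 1), f j * x ^ (n - j) := by
  rw [Finset.sum_range_succ, Nat.sub_self, pow_zero, mul_one, add_comm, Finset.mul_sum]
  congr 1
  refine Finset.sum_congr rfl fun j hj => ?_
  rw [Nat.succ_sub (Finset.mem_range_succ_iff.mp hj), pow_succ']
  exact mul_left_comm _ _ _

theorem twelve_pow_mul_oddDF_mul_F (g : ℕ) (a1 a2 : ℝ) :
    12 ^ g * oddDF (g + 1) * F g a1 a2 =
      ∑ j ∈ Finset.range (g + 1),
        oddDF j / (2 ^ j * Nat.factorial j) * (a1 + a2) ^ (2 * j) *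
          (a1 ^ 2 - a1 * a2 + a2 ^ 2) ^ (g - j) := by
  have hodd : oddDF (g + 1) ≠ 0 := (oddDF_pos _).ne'
  rw [F, ← mul_assoc, Finset.mul_sum]
  refine Finset.sum_congr rfl fun j _ => ?_
  field_simp

theorem F_zero (a1 a2 : ℝ) : F 0 a1 a2 = 1 := by
  simp [F, oddDF_zero, oddDF_succ]

theorem F_succ (g : ℕ) (a1 a2 : ℝ) :
    (2 * ((g + 1 : ℕ) : ℝ) + 1) * F (g + 1) a1 a2 =
      (a1 + a2) ^ (2 * (g + 1)) / (24 ^ (g + 1) * Nat.factorial (g + 1)) +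
        (a1 ^ 2 - a1 * a2 + a2 ^ 2) / 12 * F g a1 a2 := by
  have hodd : oddDF (g + 1) ≠ 0 := (oddDF_pos _).ne'
  have h24 : (24 : ℝ) ^ (g + 1) = 12 ^ (g + 1) * 2 ^ (g + 1) := by rw [← mul_pow]; norm_num
  have hnorm : (12 : ℝ) ^ (g + 1) * oddDF (g + 1) ≠ 0 := mul_ne_zero (by positivity) hodd
  refine mul_left_cancel₀ hnorm ?_
  calc 12 ^ (g + 1) * oddDF (g + 1) * ((2 * ((g + 1 : ℕ) : ℝ) + 1) * F (g + 1) a1 a2)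
      = 12 ^ (g + 1) * oddDF (g + 1 + 1) * F (g + 1) a1 a2 := by
        rw [oddDF_succ (g + 1)]; ring
    _ = oddDF (g + 1) / (2 ^ (g + 1) * Nat.factorial (g + 1)) * (a1 + a2) ^ (2 * (g + 1)) +
          (a1 ^ 2 - a1 * a2 + a2 ^ 2) * (12 ^ g * oddDF (g + 1) * F g a1 a2) := by
        rw [twelve_pow_mul_oddDF_mul_F, sum_range_succ_mul_pow_sub,
          ← twelve_pow_mul_oddDF_mul_F]
    _ = 12 ^ (g + 1) * oddDF (g + 1) *
          ((a1 + a2) ^ (2 * (g + 1)) / (24 ^ (g + 1) * Nat.factorial (g + 1)) +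
            (a1 ^ 2 - a1 * a2 + a2 ^ 2) / 12 * F g a1 a2) := by
        rw [h24]
        field_simp
        ring

theorem F_initial_and_recursion :
    (∀ a1 a2 : ℝ, F 0 a1 a2 = 1) ∧
    (∀ g : ℕ, 1 ≤ g → ∀ a1 a2 : ℝ,
      (2 * (g : ℝ) + 1) * F g a1 a2 =
        (a1 + a2) ^ (2 * g) / (24 ^ g * Nat.factorial g) +
          ((a1 ^ 2 - a1 * a2 + a2 ^ 2) / 12) * F (g - 1) a1 a2) := by
  refine ⟨F_zero, fun g hg a1 a2 => ?_⟩
  obtain ⟨k, rfl⟩ := Nat.exists_eq_add_of_le' hg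
  exact F_succ k a1 a2
end

section
/- Suppose (G_g)_{g \ge 0} is a family of functions G_g : \mathbb{R}^2 \to \mathbb{R} such that G_0(a1,a2) = 1 for all a1, a2, and for every g \ge 1 and all real a1, a2 one has (2g+1) * G_g(a1,a2) = (a1+a2)^{2g} / (24^g * g!) + ((a1^2 - a1*a2 + a2^2)/12) * G_{g-1}(a1,a2). Then for every g \ge 0 and all real a1, a2, G_g(a1,a2) = (1/12^g) * \sum_{j=0}^{g} [ (2j-1)!! / ( (2g+1)!! * (2j)!! ) ] * (a1+a2)^{2j} * (a1^2 - a1*a2 + a2^2)^{g-j}. -/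
open Finset
open scoped Nat

theorem eq_sum_of_linear_recurrence {K : Type*} [Semifield K] {u f c r : ℕ → K}
    (hc : ∀ n, c n ≠ 0) (h0 : c 0 * u 0 = f 0)
    (hrec : ∀ n, c (n + 1) * u (n + 1) = f (n + 1) + r n * u n) (n : ℕ) :
    u n = ∑ j ∈ range (n + 1), f j * (∏ i ∈ Ico j n, r i) / ∏ i ∈ Ico j (n + 1), c i := by
  induction n with
  | zero => simpa using eq_div_of_mul_eq (hc 0) (by rw [mul_comm, h0])
  | succ n ih =>
    have extend_term : ∀ j ∈ range (n + 1),
        f j * (∏ i ∈ Ico j (n + 1), r i) / ∏ i ∈ Ico j (n + 2), c i =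
          r n / c (n + 1) * (f j * (∏ i ∈ Ico j n, r i) / ∏ i ∈ Ico j (n + 1), c i) := by
      intro j hj
      have hjn : j ≤ n := mem_range_succ_iff.mp hj
      rw [prod_Ico_succ_top hjn, prod_Ico_succ_top (hjn.trans n.le_succ), div_mul_div_comm]
      congr 1 <;> ring
    calc u (n + 1) = (f (n + 1) + r n * u n) / c (n + 1) :=
          eq_div_of_mul_eq (hc _) (by rw [mul_comm, hrec])
      _ = r n / c (n + 1) * u n + f (n + 1) / c (n + 1) := by ring
      _ = _ := by
        rw [sum_range_succ _ (n + 1), sum_congr rfl extend_term, ← mul_sum, ← ih]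
        simp

-- At `n = 0` truncated subtraction gives `0‼ = 1`, the conventional value of `(-1)‼`.
theorem doubleFactorial_two_mul_sub_one_eq_prod (n : ℕ) :
    (2 * n - 1)‼ = ∏ i ∈ range n, (2 * i + 1) := by
  cases n with
  | zero => rfl
  | succ n =>
    rw [prod_range_succ', mul_zero, zero_add, mul_one]
    exact Nat.doubleFactorial_eq_prod_odd n

theorem prod_Ico_two_mul_add_one {K : Type*} [Semifield K] [CharZero K] {m n : ℕ} (h : m ≤ n) :
    ∏ i ∈ Ico m n, (2 * (i : K) + 1) = ((2 * n - 1)‼ : K) / ((2 * m - 1)‼ : K) := by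
  have hm : ((2 * m - 1)‼ : K) ≠ 0 := Nat.cast_ne_zero.mpr (Nat.doubleFactorial_pos _).ne'
  rw [eq_div_iff hm, mul_comm]
  simp only [doubleFactorial_two_mul_sub_one_eq_prod]
  exact_mod_cast prod_range_mul_prod_Ico (fun i ↦ 2 * i + 1) h

theorem recursion_unique_solution_general {K : Type*} [Semifield K] [CharZero K]
    (u : ℕ → K) (s q : K) (h0 : u 0 = 1)
    (hrec : ∀ g : ℕ, 1 ≤ g →
      (2 * (g : K) + 1) * u g = s ^ (2 * g) / (24 ^ g * g !) + q / 12 * u (g - 1)) (g : ℕ) :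
    u g = 1 / 12 ^ g * ∑ j ∈ range (g + 1),
      ((2 * j - 1)‼ : K) / ((2 * g + 1)‼ * (2 * j)‼) * s ^ (2 * j) * q ^ (g - j) := by
  have hu := eq_sum_of_linear_recurrence (u := u) (f := fun g ↦ s ^ (2 * g) / (24 ^ g * g !))
    (c := fun g ↦ 2 * (g : K) + 1) (r := fun _ ↦ q / 12) (fun n ↦ by norm_cast) (by simp [h0])
    (fun n ↦ hrec (n + 1) n.succ_pos) g
  rw [hu, mul_sum]
  refine sum_congr rfl fun j hj ↦ ?_
  have hjg : j ≤ g := mem_range_succ_iff.mp hj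
  have odd_index : 2 * (g + 1) - 1 = 2 * g + 1 := rfl
  have pow_twelve : (12 : K) ^ g = 12 ^ (g - j) * 12 ^ j := (pow_sub_mul_pow 12 hjg).symm
  have pow_twenty_four : (24 : K) ^ j = 12 ^ j * 2 ^ j := by rw [← mul_pow]; norm_num
  rw [prod_const, Nat.card_Ico, prod_Ico_two_mul_add_one (hjg.trans g.le_succ), div_pow,
    pow_twelve, pow_twenty_four, Nat.doubleFactorial_two_mul, odd_index]
  push_cast
  field_simp

theorem oddDF_eq_doubleFactorial (n : ℕ) : oddDF n = (2 * n - 1)‼ := by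
  have factorial_two_mul : (2 * n)! = (2 * n - 1)‼ * (2 ^ n * n !) := by
    rw [← Nat.doubleFactorial_two_mul, mul_comm (2 * n - 1)‼]
    cases n with
    | zero => rfl
    | succ n => exact Nat.factorial_eq_mul_doubleFactorial (2 * n + 1)
  rw [oddDF, div_eq_iff (by positivity)]
  exact_mod_cast factorial_two_mul

/-- Uniqueness: any family `G_g` satisfying `G_0 = 1` and the double ramification
recursion agrees with the closed form
`(1/12^g) * ∑_{j=0}^g ((2j-1)!! / ((2g+1)!! * (2j)!!)) *
  (a1+a2)^{2j} * (a1^2 - a1*a2 + a2^2)^{g-j}`, where `(2j)!! = 2^j * j!`. -/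
theorem recursion_unique_solution (G : ℕ → ℝ → ℝ → ℝ)
    (h0 : ∀ a1 a2 : ℝ, G 0 a1 a2 = 1)
    (hrec : ∀ g : ℕ, 1 ≤ g → ∀ a1 a2 : ℝ,
      (2 * (g : ℝ) + 1) * G g a1 a2 =
        (a1 + a2) ^ (2 * g) / (24 ^ g * Nat.factorial g) +
          ((a1 ^ 2 - a1 * a2 + a2 ^ 2) / 12) * G (g - 1) a1 a2) :
    ∀ g : ℕ, ∀ a1 a2 : ℝ,
      G g a1 a2 =
        (1 / 12 ^ g) * ∑ j ∈ Finset.range (g + 1),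
          (oddDF j / (oddDF (g + 1) * (2 ^ j * Nat.factorial j))) *
            (a1 + a2) ^ (2 * j) * (a1 ^ 2 - a1 * a2 + a2 ^ 2) ^ (g - j) := by
  intro g a1 a2
  simpa [oddDF_eq_doubleFactorial, Nat.doubleFactorial_two_mul, mul_add] using
    recursion_unique_solution_general (G · a1 a2) (a1 + a2) (a1 ^ 2 - a1 * a2 + a2 ^ 2)
      (h0 a1 a2) (hrec · · a1 a2) g
end

section
/- Let p, q be complex numbers with 0 < |q| < |p| < 1. Then the family a \mapsto a * p^a / (1 - q^a), indexed by nonzero integers a, is absolutely summable, and \sum_{a \in \mathbb{Z}, a \ne 0} a p^a / (1 - q^a) = p/(1-p)^2 + \sum_{n \ge 1} q^n \sum_{d | n} d * (p^d + p^{-d}), where the outer series on the right also converges absolutely. -/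
/-!
Expanding `q ^ d / (1 - q ^ d)` as a geometric series and grouping the resulting double sum
`∑ a d * q ^ (d * m)` by the product `n = d * m` turns a Lambert series into the power series whose
coefficients are the divisor sums of `a`. For `a d = d * x ^ d` this requires `‖x * q‖ < 1`, which
holds for both `x = p` and `x = p⁻¹` because `‖q‖ < ‖p‖ < 1`.

In the lattice sum the terms with negative index form the Lambert series of `x = p⁻¹`, since
`-p ^ (-d) / (1 - q ^ (-d)) = p ^ (-d) * q ^ d / (1 - q ^ d)`. The terms with positive index form
that of `x = p` plus `∑ d * p ^ d = p / (1 - p) ^ 2`, since `1 / (1 - u) = 1 + u / (1 - u)`.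
-/

lemma hasSum_int_ne_zero_of_pnat {M : Type*} [AddCommMonoid M] [TopologicalSpace M]
    [ContinuousAdd M] {f : ℤ → M} {s t : M} (hpos : HasSum (fun n : ℕ+ ↦ f n) s)
    (hneg : HasSum (fun n : ℕ+ ↦ f (-n)) t) :
    HasSum (fun a : {a : ℤ // a ≠ 0} ↦ f a) (s + t) := by
  let g : ℤ → M := {a : ℤ | a ≠ 0}.indicator f
  have hg {a : ℤ} (ha : a ≠ 0) : g a = f a := Set.indicator_of_mem ha f
  have hg_zero : g 0 = 0 := by simp [g]
  have hg_pos : HasSum (fun n : ℕ ↦ g (n + 1)) s := by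
    refine ((hasSum_pnat_iff_hasSum_succ (f := fun n : ℕ ↦ f n)).1 hpos).congr_fun fun n ↦ ?_
    rw [hg (by lia), Nat.cast_succ]
  have hg_neg : HasSum (fun n : ℕ ↦ g (-(n + 1))) t := by
    refine ((hasSum_pnat_iff_hasSum_succ (f := fun n : ℕ ↦ f (-n))).1 hneg).congr_fun fun n ↦ ?_
    rw [hg (by lia), Nat.cast_succ]
  have hg_sum := HasSum.of_add_one_of_neg_add_one hg_pos hg_neg
  rw [hg_zero, add_zero] at hg_sum
  exact hasSum_subtype_iff_indicator.2 hg_sum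

section NormedField

variable {𝕜 : Type*} [NormedField 𝕜] {a b : ℕ → 𝕜} {p q x : 𝕜}

/-- The Lambert series `∑_{d ≥ 1} a d q ^ d / (1 - q ^ d)` of a coefficient sequence `a`, whose
value at `0` is ignored. As a `tsum` it is `0` when the terms are not summable. -/
noncomputable def lambertSeries (a : ℕ → 𝕜) (q : 𝕜) : 𝕜 :=
  ∑' d : ℕ+, a d * (q ^ (d : ℕ) / (1 - q ^ (d : ℕ)))

lemma norm_pow_pnat_le_norm (hq : ‖q‖ ≤ 1) (d : ℕ+) : ‖q ^ (d : ℕ)‖ ≤ ‖q‖ := by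
  rw [norm_pow]
  exact pow_le_of_le_one (norm_nonneg q) hq d.ne_zero

lemma one_sub_pow_pnat_ne_zero (hq : ‖q‖ < 1) (d : ℕ+) : 1 - q ^ (d : ℕ) ≠ 0 := by
  intro h
  have hnorm := norm_pow_pnat_le_norm hq.le d
  rw [← sub_eq_zero.1 h, norm_one] at hnorm
  exact hnorm.not_gt hq

lemma hasSum_pow_mul_pnat (hq : ‖q‖ < 1) (d : ℕ+) :
    HasSum (fun m : ℕ+ ↦ q ^ (d * m : ℕ)) (q ^ (d : ℕ) / (1 - q ^ (d : ℕ))) := by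
  have hqd : ‖q ^ (d : ℕ)‖ < 1 := (norm_pow_pnat_le_norm hq.le d).trans_lt hq
  have hgeom := (hasSum_geometric_of_norm_lt_one hqd).mul_left (q ^ (d : ℕ))
  refine (hasSum_pnat_iff_hasSum_succ (f := fun m ↦ q ^ (d * m : ℕ))).2 ?_
  simpa only [pow_mul, pow_succ', div_eq_mul_inv] using hgeom

lemma summable_norm_lambertSeries (hq : ‖q‖ < 1) (ha : Summable fun d ↦ ‖a d * q ^ d‖) :
    Summable fun d : ℕ+ ↦ ‖a d * (q ^ (d : ℕ) / (1 - q ^ (d : ℕ)))‖ := by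
  refine ((ha.comp_injective PNat.coe_injective).div_const (1 - ‖q‖)).of_nonneg_of_le
    (fun _ ↦ norm_nonneg _) fun d ↦ ?_
  have hden : 1 - ‖q‖ ≤ ‖1 - q ^ (d : ℕ)‖ :=
    calc 1 - ‖q‖ ≤ ‖(1 : 𝕜)‖ - ‖q ^ (d : ℕ)‖ := by
          rw [norm_one]
          exact sub_le_sub_left (norm_pow_pnat_le_norm hq.le d) 1
      _ ≤ ‖1 - q ^ (d : ℕ)‖ := norm_sub_norm_le _ _
  rw [← mul_div_assoc, norm_div]
  exact div_le_div_of_nonneg_left (norm_nonneg _) (sub_pos.2 hq) hden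

lemma hasSum_lambertSeries [CompleteSpace 𝕜] (hq : ‖q‖ < 1)
    (ha : Summable fun d ↦ ‖a d * q ^ d‖) :
    HasSum (fun d : ℕ+ ↦ a d * (q ^ (d : ℕ) / (1 - q ^ (d : ℕ)))) (lambertSeries a q) :=
  (summable_norm_lambertSeries hq ha).of_norm.hasSum

lemma lambertSeries_add [CompleteSpace 𝕜] (hq : ‖q‖ < 1)
    (ha : Summable fun d ↦ ‖a d * q ^ d‖) (hb : Summable fun d ↦ ‖b d * q ^ d‖) :
    lambertSeries (a + b) q = lambertSeries a q + lambertSeries b q := by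
  simpa only [lambertSeries, Pi.add_apply, add_mul] using
    ((hasSum_lambertSeries hq ha).add (hasSum_lambertSeries hq hb)).tsum_eq

lemma summable_norm_mul_pow_mul (hq : ‖q‖ < 1) (ha : Summable fun d ↦ ‖a d * q ^ d‖) :
    Summable fun c : ℕ+ × ℕ+ ↦ ‖a c.1 * q ^ (c.1 * c.2 : ℕ)‖ := by
  have hgeom : Summable fun m : ℕ+ ↦ ‖q‖ ^ ((m : ℕ) - 1) :=
    (summable_pnat_iff_summable_succ (f := fun m ↦ ‖q‖ ^ (m - 1))).2
      (summable_geometric_of_lt_one (norm_nonneg q) hq)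
  refine ((ha.comp_injective PNat.coe_injective).mul_of_nonneg hgeom (fun _ ↦ norm_nonneg _)
    fun _ ↦ by positivity).of_nonneg_of_le (fun _ ↦ norm_nonneg _) ?_
  rintro ⟨d, m⟩
  have hexp : (d : ℕ) + (m - 1) ≤ d * m :=
    calc (d : ℕ) + (m - 1) ≤ d + d * (m - 1) :=
          Nat.add_le_add_left (Nat.le_mul_of_pos_left _ d.pos) d
      _ = d * m := by rw [add_comm, ← mul_add_one, Nat.sub_one_add_one m.ne_zero]
  calc ‖a d * q ^ (d * m : ℕ)‖ = ‖a d‖ * ‖q‖ ^ (d * m : ℕ) := by rw [norm_mul, norm_pow]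
    _ ≤ ‖a d‖ * ‖q‖ ^ ((d : ℕ) + (m - 1)) :=
        mul_le_mul_of_nonneg_left (pow_le_pow_of_le_one (norm_nonneg q) hq.le hexp) (norm_nonneg _)
    _ = ‖a d * q ^ (d : ℕ)‖ * ‖q‖ ^ ((m : ℕ) - 1) := by
        rw [norm_mul, norm_pow, pow_add, mul_assoc]

lemma sum_divisorsAntidiagonal_mul_pow {R : Type*} [CommSemiring R] (a : ℕ → R) (q : R) (n : ℕ) :
    ∑ c ∈ n.divisorsAntidiagonal, a c.1 * q ^ (c.1 * c.2) = q ^ n * ∑ d ∈ n.divisors, a d := by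
  rw [Nat.sum_divisorsAntidiagonal fun d m ↦ a d * q ^ (d * m), Finset.mul_sum]
  refine Finset.sum_congr rfl fun d hd ↦ ?_
  rw [Nat.mul_div_cancel' (Nat.dvd_of_mem_divisors hd), mul_comm]

lemma hasSum_pow_mul_sum_divisors [CompleteSpace 𝕜] (hq : ‖q‖ < 1)
    (ha : Summable fun d ↦ ‖a d * q ^ d‖) :
    HasSum (fun n : ℕ ↦ q ^ (n + 1) * ∑ d ∈ (n + 1).divisors, a d) (lambertSeries a q) := by
  have hdouble := (summable_norm_mul_pow_mul hq ha).of_norm.hasSum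
  have hrows := hdouble.prod_fiberwise fun d ↦ (hasSum_pow_mul_pnat hq d).mul_left (a d)
  have hdivisors := (sigmaAntidiagonalEquivProd.hasSum_iff.2 hdouble).sigma
    fun n ↦ hasSum_fintype _
  rw [lambertSeries, hrows.tsum_eq]
  refine (hasSum_pnat_iff_hasSum_succ (f := fun n ↦ q ^ n * ∑ d ∈ n.divisors, a d)).1 <|
    hdivisors.congr_fun fun n ↦ ?_
  rw [← sum_divisorsAntidiagonal_mul_pow, ← Finset.sum_coe_sort]
  rfl

lemma summable_norm_pow_mul_sum_divisors (hq : ‖q‖ < 1) (ha : Summable fun d ↦ ‖a d * q ^ d‖) :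
    Summable fun n : ℕ ↦ ‖q ^ (n + 1) * ∑ d ∈ (n + 1).divisors, a d‖ := by
  have hreal := hasSum_pow_mul_sum_divisors (a := fun d ↦ ‖a d‖) (q := ‖q‖)
    (by rwa [norm_norm]) (by simpa only [norm_mul, norm_pow, norm_norm] using ha)
  refine hreal.summable.of_nonneg_of_le (fun _ ↦ norm_nonneg _) fun n ↦ ?_
  rw [norm_mul, norm_pow]
  exact mul_le_mul_of_nonneg_left (norm_sum_le _ _) (by positivity)

lemma summable_norm_natCast_mul_pow (hx : ‖x‖ < 1) :
    Summable fun d : ℕ ↦ ‖(d : 𝕜) * x ^ d‖ := by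
  simpa only [pow_one] using summable_norm_pow_mul_geometric_of_norm_lt_one 1 hx

lemma hasSum_natCast_mul_pow (hx : ‖x‖ < 1) :
    HasSum (fun d : ℕ+ ↦ (d : 𝕜) * x ^ (d : ℕ)) (x / (1 - x) ^ 2) := by
  refine (hasSum_pnat_iff (f := fun d : ℕ ↦ (d : 𝕜) * x ^ d)).2 ?_
  simpa using hasSum_coe_mul_geometric_of_norm_lt_one hx

/-- The summand `a p ^ a / (1 - q ^ a)` of the lattice sum over nonzero integers `a`, extended to
`a = 0` by the junk value `0 / 0 = 0`. -/
def latticeTerm (p q : 𝕜) (a : ℤ) : 𝕜 := a * p ^ a / (1 - q ^ a)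

lemma latticeTerm_pnat (hq : ‖q‖ < 1) (d : ℕ+) :
    latticeTerm p q d =
      d * p ^ (d : ℕ) + d * p ^ (d : ℕ) * (q ^ (d : ℕ) / (1 - q ^ (d : ℕ))) := by
  have hden := one_sub_pow_pnat_ne_zero hq d
  simp only [latticeTerm, zpow_natCast, Int.cast_natCast]
  field_simp
  ring

lemma latticeTerm_neg_pnat (hq₀ : q ≠ 0) (hq : ‖q‖ < 1) (d : ℕ+) :
    latticeTerm p q (-d) = d * p⁻¹ ^ (d : ℕ) * (q ^ (d : ℕ) / (1 - q ^ (d : ℕ))) := by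
  have hden := one_sub_pow_pnat_ne_zero hq d
  have hden' : q ^ (d : ℕ) - 1 ≠ 0 := by rwa [← neg_sub, neg_ne_zero]
  simp only [latticeTerm, zpow_neg, zpow_natCast, Int.cast_neg, Int.cast_natCast, inv_pow]
  field_simp
  ring

lemma summable_norm_natCast_mul_pow_mul_pow (hx : ‖x * q‖ < 1) :
    Summable fun d : ℕ ↦ ‖(d : 𝕜) * x ^ d * q ^ d‖ := by
  simpa only [mul_pow, mul_assoc] using summable_norm_natCast_mul_pow hx

lemma norm_mul_lt_one (hp : ‖p‖ < 1) (hq : ‖q‖ < 1) : ‖p * q‖ < 1 := by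
  rw [norm_mul]
  exact mul_lt_one_of_nonneg_of_lt_one_left (norm_nonneg p) hp hq.le

lemma norm_inv_mul_lt_one (hqp : ‖q‖ < ‖p‖) : ‖p⁻¹ * q‖ < 1 := by
  rwa [norm_mul, norm_inv, inv_mul_lt_one₀ ((norm_nonneg q).trans_lt hqp)]

lemma natCast_mul_zpow_add_zpow_neg (p : 𝕜) :
    (fun d : ℕ ↦ (d : 𝕜) * (p ^ (d : ℤ) + p ^ (-(d : ℤ)))) =
      (fun d : ℕ ↦ (d : 𝕜) * p ^ d) + fun d : ℕ ↦ (d : 𝕜) * p⁻¹ ^ d := by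
  funext d
  simp only [Pi.add_apply, zpow_neg, zpow_natCast, inv_pow, mul_add]

lemma summable_norm_natCast_mul_zpow_add_zpow_neg_mul_pow (hpq : ‖p * q‖ < 1)
    (hpq_inv : ‖p⁻¹ * q‖ < 1) :
    Summable fun d : ℕ ↦ ‖(d : 𝕜) * (p ^ (d : ℤ) + p ^ (-(d : ℤ))) * q ^ d‖ := by
  refine ((summable_norm_natCast_mul_pow_mul_pow hpq).add
    (summable_norm_natCast_mul_pow_mul_pow hpq_inv)).of_nonneg_of_le (fun _ ↦ norm_nonneg _)
    fun d ↦ ?_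
  rw [congr_fun (natCast_mul_zpow_add_zpow_neg p) d, Pi.add_apply, add_mul]
  exact norm_add_le _ _

lemma summable_norm_latticeTerm (hq₀ : q ≠ 0) (hqp : ‖q‖ < ‖p‖) (hp : ‖p‖ < 1) :
    Summable fun a : {a : ℤ // a ≠ 0} ↦ ‖latticeTerm p q a‖ := by
  have hq : ‖q‖ < 1 := hqp.trans hp
  have hlambert {x : 𝕜} (hx : ‖x * q‖ < 1) :=
    summable_norm_lambertSeries hq (summable_norm_natCast_mul_pow_mul_pow hx)
  have hpos : Summable fun d : ℕ+ ↦ ‖latticeTerm p q d‖ := by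
    simp only [latticeTerm_pnat hq]
    exact (((summable_norm_natCast_mul_pow hp).comp_injective PNat.coe_injective).add
      (hlambert (norm_mul_lt_one hp hq))).of_nonneg_of_le
      (fun _ ↦ norm_nonneg _) fun _ ↦ norm_add_le _ _
  have hneg : Summable fun d : ℕ+ ↦ ‖latticeTerm p q (-d)‖ := by
    simpa only [latticeTerm_neg_pnat hq₀ hq] using hlambert (norm_inv_mul_lt_one hqp)
  exact (hasSum_int_ne_zero_of_pnat (f := fun a ↦ ‖latticeTerm p q a‖)
    hpos.hasSum hneg.hasSum).summable

lemma hasSum_latticeTerm [CompleteSpace 𝕜] (hq₀ : q ≠ 0) (hqp : ‖q‖ < ‖p‖) (hp : ‖p‖ < 1) :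
    HasSum (fun a : {a : ℤ // a ≠ 0} ↦ latticeTerm p q a)
      (p / (1 - p) ^ 2 +
        lambertSeries (fun d ↦ (d : 𝕜) * (p ^ (d : ℤ) + p ^ (-(d : ℤ)))) q) := by
  have hq : ‖q‖ < 1 := hqp.trans hp
  have hcoeff := summable_norm_natCast_mul_pow_mul_pow (norm_mul_lt_one hp hq)
  have hcoeff_inv := summable_norm_natCast_mul_pow_mul_pow (norm_inv_mul_lt_one hqp)
  rw [natCast_mul_zpow_add_zpow_neg, lambertSeries_add hq hcoeff hcoeff_inv, ← add_assoc]
  have hlambert := hasSum_lambertSeries hq hcoeff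
  have hlambert_inv := hasSum_lambertSeries hq hcoeff_inv
  refine hasSum_int_ne_zero_of_pnat (f := latticeTerm p q) ?_ ?_
  · simpa only [latticeTerm_pnat hq] using (hasSum_natCast_mul_pow hp).add hlambert
  · simpa only [latticeTerm_neg_pnat hq₀ hq] using hlambert_inv

theorem lattice_sum_q_expansion_general [CompleteSpace 𝕜] (p q : 𝕜)
    (hq : 0 < ‖q‖) (hqp : ‖q‖ < ‖p‖) (hp : ‖p‖ < 1) :
    Summable (fun a : {a : ℤ // a ≠ 0} ↦ ‖(a.1 : 𝕜) * p ^ a.1 / (1 - q ^ a.1)‖) ∧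
    Summable (fun n : ℕ ↦
      ‖q ^ (n + 1) * ∑ d ∈ (n + 1).divisors, (d : 𝕜) * (p ^ (d : ℤ) + p ^ (-(d : ℤ)))‖) ∧
    ∑' a : {a : ℤ // a ≠ 0}, (a.1 : 𝕜) * p ^ a.1 / (1 - q ^ a.1) =
      p / (1 - p) ^ 2 +
        ∑' n : ℕ, q ^ (n + 1) *
          ∑ d ∈ (n + 1).divisors, (d : 𝕜) * (p ^ (d : ℤ) + p ^ (-(d : ℤ))) := by
  have hq₀ : q ≠ 0 := norm_pos_iff.1 hq
  have hq₁ : ‖q‖ < 1 := hqp.trans hp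
  have hcoeff := summable_norm_natCast_mul_zpow_add_zpow_neg_mul_pow (norm_mul_lt_one hp hq₁)
    (norm_inv_mul_lt_one hqp)
  refine ⟨summable_norm_latticeTerm hq₀ hqp hp,
    summable_norm_pow_mul_sum_divisors hq₁ hcoeff, ?_⟩
  rw [(hasSum_pow_mul_sum_divisors hq₁ hcoeff).tsum_eq]
  exact (hasSum_latticeTerm hq₀ hqp hp).tsum_eq

end NormedField

/-- For complex `p, q` with `0 < |q| < |p| < 1`, the family
`a ↦ a p^a/(1 - q^a)` over nonzero integers `a` is absolutely summable, and
`∑_{a ≠ 0} a p^a/(1 - q^a) = p/(1-p)^2 + ∑_{n ≥ 1} q^n ∑_{d ∣ n} d (p^d + p^{-d})`,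
where the outer series on the right also converges absolutely. -/
theorem lattice_sum_q_expansion (p q : ℂ)
    (hq : 0 < ‖q‖) (hqp : ‖q‖ < ‖p‖) (hp : ‖p‖ < 1) :
    Summable (fun a : {a : ℤ // a ≠ 0} =>
      ‖(a.1 : ℂ) * p ^ a.1 / (1 - q ^ a.1)‖) ∧
    Summable (fun n : ℕ =>
      ‖q ^ (n + 1) * ∑ d ∈ (n + 1).divisors,
        (d : ℂ) * (p ^ (d : ℤ) + p ^ (-(d : ℤ)))‖) ∧
    ∑' a : {a : ℤ // a ≠ 0}, (a.1 : ℂ) * p ^ a.1 / (1 - q ^ a.1) =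
      p / (1 - p) ^ 2 +
        ∑' n : ℕ, q ^ (n + 1) * ∑ d ∈ (n + 1).divisors,
          (d : ℂ) * (p ^ (d : ℤ) + p ^ (-(d : ℤ))) :=
  lattice_sum_q_expansion_general p q hq hqp hp
end
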